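/- Let λ be a partition of n and k ≥ 1. Then, as formal power series in the single variable q: ((q;q)_n)^k · Σ_{T ∈ SYT(λ)} Σ_{S ∈ (ℕ^k)^n with σ_{des(T)}(S) = ε} q^{|S|} = Σ_{T ∈ SYT(λ)} Σ_{σ⃗ ∈ S_n^{k−1}} q^{comaj_T(σ⃗,ε)}, where |S| = Σ_{j=1}^n Σ_{i=1}^k s^j_i is the sum of all entries of S. (Both sides equal the graded multiplicity ⟨F H_n^{⊗k}, s_λ⟩ of the irreducible S_n-representation indexed by λ in the k-th Kronecker/tensor power of the coinvariant algebra H_n = ℂ[x_1,…,x_n]/(p_1,…,p_n).) -/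

import Mathlib

open scoped Classical

namespace RomeroComaj

noncomputable section

/-- `Seq r` is `ℕ^r`, the type of sequences of natural numbers of length `r`. -/
abbrev Seq (r : ℕ) := Fin r → ℕ

/-- strict lexicographic order on `ℕ^r`. -/
def lexLt {r : ℕ} (a b : Seq r) : Prop :=
  ∃ i : Fin r, (∀ j : Fin r, j < i → a j = b j) ∧ a i < b i

/-- weak lexicographic order on `ℕ^r`. -/
def lexLe {r : ℕ} (a b : Seq r) : Prop :=
  lexLt a b ∨ a = b

/-- `RNbr R a b` : the (1-indexed) indices `a` and `b` are `R`-neighbors,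
i.e. (for `a < b`) all of `a, a+1, …, b-1` lie in `R`. -/
def RNbr (R : Finset ℕ) (a b : ℕ) : Prop :=
  ∀ t ∈ Finset.Ico (min a b) (max a b), t ∈ R

/-- the value `σ_i` of the one-line notation of `σ`, both position `i` and
the value being 1-indexed (junk value `0` outside `1 ≤ i ≤ n`). -/
def pget {n : ℕ} (σ : Equiv.Perm (Fin n)) (i : ℕ) : ℕ :=
  if h : i - 1 < n then (σ ⟨i - 1, h⟩).val + 1 else 0

/-- the sequence `s^i` of a list `S = (s^1, …, s^n)`, `i` being 1-indexed. -/
def sget {n r : ℕ} (S : Fin n → Seq r) (i : ℕ) : Seq r :=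
  if h : i - 1 < n then S ⟨i - 1, h⟩ else 0

/-- the condition for `i` to belong to `Des_{R,S}(σ)`:
`s^{σ_i} > s^{σ_{i+1}} − χ(σ_{i+1} < σ_i ∧ σ_{i+1} ≁_R σ_i) − χ(σ_{i+1} > σ_i ∧ σ_i ∼_R σ_{i+1})`. -/
def desCond {n r : ℕ} (R : Finset ℕ) (S : Fin n → Seq r) (σ : Equiv.Perm (Fin n)) (i : ℕ) :
    Prop :=
  if (pget σ (i+1) < pget σ i ∧ ¬ RNbr R (pget σ (i+1)) (pget σ i)) ∨
      (pget σ i < pget σ (i+1) ∧ RNbr R (pget σ i) (pget σ (i+1)))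
  then lexLe (sget S (pget σ (i+1))) (sget S (pget σ i))
  else lexLt (sget S (pget σ (i+1))) (sget S (pget σ i))

/-- `Des_{R,S}(σ) ⊆ {1, …, n−1}` (1-indexed positions). -/
def DesSet {n r : ℕ} (R : Finset ℕ) (S : Fin n → Seq r) (σ : Equiv.Perm (Fin n)) : Finset ℕ :=
  (Finset.Icc 1 (n-1)).filter (fun i => desCond R S σ i)

/-- `Comaj_{R,S}(σ) = ∑_{i ∈ Des_{R,S}(σ)} (n − i)`. -/
def Comaj {n r : ℕ} (R : Finset ℕ) (S : Fin n → Seq r) (σ : Equiv.Perm (Fin n)) : ℕ :=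
  ∑ i ∈ DesSet R S σ, (n - i)

/-- `s^i` is read before `s^j` in the reading order of `S` (with respect to `R`);
`i, j` are 1-indexed. -/
def readBefore {n r : ℕ} (R : Finset ℕ) (S : Fin n → Seq r) (i j : ℕ) : Prop :=
  lexLt (sget S i) (sget S j) ∨
    (sget S i = sget S j ∧ ((i < j ∧ ¬ RNbr R i j) ∨ (j < i ∧ RNbr R j i)))

/-- `IsReading R S σ` says that the reading permutation `σ_R(S)` equals `σ`,
i.e. `σ` lists `1, …, n` in the reading order of `S`. -/
def IsReading {n r : ℕ} (R : Finset ℕ) (S : Fin n → Seq r) (σ : Equiv.Perm (Fin n)) : Prop :=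
  ∀ i ∈ Finset.Icc 1 (n-1), readBefore R S (pget σ i) (pget σ (i+1))

/-- the operator `Z_{R,σ} : (ℕ^r)^n → (ℕ^{r+1})^n`, prepending to `s^v` the number of
descents of `σ` (w.r.t. `R, S`) at positions strictly before the position of `v` in `σ`. -/
def Zop {n r : ℕ} (R : Finset ℕ) (σ : Equiv.Perm (Fin n)) (S : Fin n → Seq r) :
    Fin n → Seq (r+1) :=
  fun v => Fin.cons ((DesSet R S σ ∩ Finset.Ico 1 ((σ.symm v).val + 1)).card) (S v)

/-- `Zvec R σs i = Z_{R,σ^i} ⋯ Z_{R,σ^1}(∅)` where `σ^{j+1} = σs j`. -/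
def Zvec {n : ℕ} (R : Finset ℕ) (σs : ℕ → Equiv.Perm (Fin n)) : (i : ℕ) → Fin n → Seq i
  | 0 => fun _ => (0 : Seq 0)
  | (i+1) => Zop R (σs i) (Zvec R σs i)

/-- extend a finite vector of permutations to `ℕ`, by the identity. -/
def extFun {n r : ℕ} (σv : Fin r → Equiv.Perm (Fin n)) : ℕ → Equiv.Perm (Fin n) :=
  fun j => if h : j < r then σv ⟨j, h⟩ else 1

/-- `comajI R k σv i = comaj^i_R(σ⃗)` for `1 ≤ i ≤ k`, where `σ⃗ = σv` has length `k−1`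
and `σ^k = ε`. -/
def comajI {n : ℕ} (R : Finset ℕ) (k : ℕ) (σv : Fin (k-1) → Equiv.Perm (Fin n)) (i : ℕ) : ℕ :=
  Comaj R (Zvec R (extFun σv) (i-1)) (extFun σv (i-1))

/-- the exponent of the monomial `q^S` for `S ∈ (ℕ^r)^n` : the (0-indexed) variable `i`
(that is, `q_{i+1}`) records the `(r−i)`-th (0-indexed: `r−1−i`-th) coordinates. -/
def expOf {n r : ℕ} (S : Fin n → Seq r) : Fin r →₀ ℕ :=
  Finsupp.equivFunOnFinite.symm (fun i => ∑ j : Fin n, S j (Fin.rev i))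

/-- the formal power series whose coefficient at a monomial `d` counts the elements
`a : α` satisfying `P a d`. -/
def countSeriesP {σty α : Type*} (P : α → (σty →₀ ℕ) → Prop) : MvPowerSeries σty ℤ :=
  fun d => (Nat.card {a : α // P a d} : ℤ)

/-- `∑_{S ∈ (ℕ^r)^n, P S} q^S`. -/
def countSeries {n r : ℕ} (P : (Fin n → Seq r) → Prop) : MvPowerSeries (Fin r) ℤ :=
  countSeriesP (fun S d => P S ∧ expOf S = d)

/-- the Pochhammer factor `(q_i; q_i)_n = ∏_{j=1}^n (1 − q_i^j)`. -/
def pochOne {r : ℕ} (n : ℕ) (i : Fin r) : MvPowerSeries (Fin r) ℤ :=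
  ∏ j ∈ Finset.Icc 1 n, (1 - (MvPowerSeries.X i : MvPowerSeries (Fin r) ℤ) ^ j)

/-- `∏_{i=1}^{r} (q_i; q_i)_n`. -/
def pochAll (n r : ℕ) : MvPowerSeries (Fin r) ℤ :=
  ∏ i : Fin r, pochOne n i

/-- the exponent of `q_1^{comaj¹_R(σ⃗)} ⋯ q_k^{comaj^k_R(σ⃗)}`. -/
def comajExp {n : ℕ} (R : Finset ℕ) (k : ℕ) (σv : Fin (k-1) → Equiv.Perm (Fin n)) :
    Fin k →₀ ℕ :=
  Finsupp.equivFunOnFinite.symm (fun i => comajI R k σv (i.val + 1))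

/-- A standard Young tableau of shape `μ` (with `μ.card` cells), recorded by the
position `pos i` of each (1-indexed) entry `i ∈ {1, …, μ.card}`; entries increase
left-to-right along rows and down columns (matrix convention), and `pos` is a
bijection from `{1, …, μ.card}` onto the cells of `μ` (normalized by `0` outside). -/
structure SYT (μ : YoungDiagram) where
  pos : ℕ → ℕ × ℕ
  mem : ∀ i ∈ Finset.Icc 1 μ.card, pos i ∈ μ
  inj : ∀ i ∈ Finset.Icc 1 μ.card, ∀ j ∈ Finset.Icc 1 μ.card, pos i = pos j → i = j
  surj : ∀ c ∈ μ, ∃ i ∈ Finset.Icc 1 μ.card, pos i = c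
  row_inc : ∀ i ∈ Finset.Icc 1 μ.card, ∀ j ∈ Finset.Icc 1 μ.card,
    (pos i).1 = (pos j).1 → (pos i).2 < (pos j).2 → i < j
  col_inc : ∀ i ∈ Finset.Icc 1 μ.card, ∀ j ∈ Finset.Icc 1 μ.card,
    (pos i).2 = (pos j).2 → (pos i).1 < (pos j).1 → i < j
  junk : ∀ i, i ∉ Finset.Icc 1 μ.card → pos i = 0

/-- `des(T)` : the set of `i ∈ {1, …, n−1}` such that `i+1` lies in a strictly
higher row of `T` than `i` (in matrix convention: a strictly larger row index). -/
def desSYT {μ : YoungDiagram} (T : SYT μ) : Finset ℕ :=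
  (Finset.Icc 1 (μ.card - 1)).filter (fun i => (T.pos i).1 < (T.pos (i+1)).1)

/-- the ordinary descent set `des(π) = {i : π_i > π_{i+1}}` (1-indexed). -/
def desPerm {n : ℕ} (π : Equiv.Perm (Fin n)) : Finset ℕ :=
  (Finset.Icc 1 (n-1)).filter (fun i => pget π (i+1) < pget π i)

/-- `comaj(π) = ∑_{i ∈ des(π)} (n − i)`. -/
def comajP {n : ℕ} (π : Equiv.Perm (Fin n)) : ℕ :=
  ∑ i ∈ desPerm π, (n - i)

/-!
Prepending a column `a` to a list `S` with reading permutation `τ` refines the reading order: the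
result has reading permutation `σ` if and only if `a ∘ σ` is weakly increasing with a strict jump
at every descent of `τ⁻¹σ`. A sequence with prescribed minimal jumps is determined by the
excesses of its jumps, so these columns have generating function `q ^ comaj(τ⁻¹σ) / (q; q)_n`.

Hence building lists column by column is a walk on `S_n` in which the step from `τ` to `σ` has
weight `q ^ comaj(τ⁻¹σ) / (q; q)_n`. On the other side, `Z_{R,σ}(S)` prepends the smallest
admissible column, so its reading permutation is `σ`, and `Comaj_{R,S}(σ) = comaj(τ⁻¹σ)` for `τ` the
reading permutation of `S`: the statistics `comaj^i` record the steps of the same walk. So the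
identity holds for every fixed set `R`, whatever family of sets the tableaux provide.
-/

section GeneratingFunctions

variable {α β ι : Type*}

/-- The generating function `∑_a q^{w a}` of a weight `w`; the coefficient at an infinite fiber of
`w` is `0`, as `Nat.card` vanishes on infinite types. -/
def genFun (w : α → ℕ) : PowerSeries ℤ :=
  PowerSeries.mk fun d => (Nat.card {a // w a = d} : ℤ)

/-- A weight has finite fibers when its generating function counts honestly in every degree. -/
def FiniteFibers (w : α → ℕ) : Prop :=
  ∀ d, (w ⁻¹' {d}).Finite

theorem FiniteFibers.of_injective {w : α → ℕ} (hw : Function.Injective w) : FiniteFibers w :=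
  fun d => (Set.finite_singleton d).preimage hw.injOn

theorem FiniteFibers.comp_injective {w : α → ℕ} (hw : FiniteFibers w) {f : β → α}
    (hf : Function.Injective f) : FiniteFibers (w ∘ f) :=
  fun d => by
    rw [Set.preimage_comp]
    exact (hw d).preimage hf.injOn

theorem FiniteFibers.sum [Fintype ι] {w : ι → α → ℕ} (hw : ∀ i, FiniteFibers (w i)) :
    FiniteFibers fun f : ι → α => ∑ i, w i (f i) := fun d => by
  have finite_le (i : ι) : (w i ⁻¹' Set.Iic d).Finite :=
    (Set.finite_Iic d).preimage' fun e _ => hw i e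
  refine (Set.Finite.pi' finite_le).subset fun f hf i => ?_
  exact (Finset.single_le_sum (f := fun i => w i (f i)) (fun _ _ => Nat.zero_le _)
    (Finset.mem_univ i)).trans_eq hf

/-- The pairs of total weight `d`, sorted by how `d` splits between the two components. -/
def prodFiberEquiv (w : α → ℕ) (w' : β → ℕ) (d : ℕ) :
    {x : α × β // w x.1 + w' x.2 = d} ≃
      Σ p : Finset.HasAntidiagonal.antidiagonal d, {a // w a = p.1.1} × {b // w' b = p.1.2} where
  toFun x := ⟨⟨(w x.1.1, w' x.1.2), Finset.HasAntidiagonal.mem_antidiagonal.2 x.2⟩,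
    ⟨x.1.1, rfl⟩, ⟨x.1.2, rfl⟩⟩
  invFun y := ⟨(y.2.1.1, y.2.2.1), by
    rw [y.2.1.2, y.2.2.2, Finset.HasAntidiagonal.mem_antidiagonal.1 y.1.2]⟩
  left_inv _ := rfl
  right_inv := by
    rintro ⟨⟨⟨_, _⟩, _⟩, ⟨a, ha⟩, ⟨b, hb⟩⟩
    dsimp only at ha hb
    subst ha hb
    rfl

theorem FiniteFibers.add {w : α → ℕ} {w' : β → ℕ} (hw : FiniteFibers w) (hw' : FiniteFibers w') :
    FiniteFibers fun x : α × β => w x.1 + w' x.2 := fun d =>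
  have (e : ℕ) : Finite {a // w a = e} := (hw e).to_subtype
  have (e : ℕ) : Finite {b // w' b = e} := (hw' e).to_subtype
  Set.finite_coe_iff.1 (Finite.of_equiv _ (prodFiberEquiv w w' d).symm)

theorem genFun_congr {w : α → ℕ} {w' : β → ℕ} (e : α ≃ β) (h : ∀ a, w' (e a) = w a) :
    genFun w = genFun w' := by
  ext d
  simp only [genFun, PowerSeries.coeff_mk]
  rw [Nat.card_congr (e.subtypeEquiv (q := fun b => w' b = d) fun a => by rw [h a])]

theorem genFun_add {w : α → ℕ} {w' : β → ℕ} (hw : FiniteFibers w) (hw' : FiniteFibers w') :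
    genFun (fun x : α × β => w x.1 + w' x.2) = genFun w * genFun w' := by
  have (e : ℕ) : Finite {a // w a = e} := (hw e).to_subtype
  have (e : ℕ) : Finite {b // w' b = e} := (hw' e).to_subtype
  ext d
  simp only [PowerSeries.coeff_mul, genFun, PowerSeries.coeff_mk]
  rw [Nat.card_congr (prodFiberEquiv w w' d), Nat.card_sigma]
  simp only [Nat.card_prod, Nat.cast_sum, Nat.cast_mul]
  exact Finset.sum_coe_sort _ fun p : ℕ × ℕ =>
    (Nat.card {a // w a = p.1} : ℤ) * Nat.card {b // w' b = p.2}

theorem genFun_sigma [Fintype ι] {γ : ι → Type*} {w : ∀ i, γ i → ℕ}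
    (hw : ∀ i, FiniteFibers (w i)) :
    genFun (fun x : Σ i, γ i => w x.1 x.2) = ∑ i, genFun (w i) := by
  have (i : ι) (d : ℕ) : Finite {c // w i c = d} := (hw i d).to_subtype
  ext d
  let e : {x : Σ i, γ i // w x.1 x.2 = d} ≃ Σ i, {c : γ i // w i c = d} :=
    { toFun := fun x => ⟨x.1.1, x.1.2, x.2⟩
      invFun := fun y => ⟨⟨y.1, y.2.1⟩, y.2.2⟩ }
  simp only [map_sum, genFun, PowerSeries.coeff_mk]
  rw [Nat.card_congr e, Nat.card_sigma, Nat.cast_sum]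

theorem genFun_fintype [Fintype α] (w : α → ℕ) : genFun w = ∑ a, PowerSeries.X ^ w a := by
  ext d
  simp only [genFun, PowerSeries.coeff_mk, map_sum, PowerSeries.coeff_X_pow, Finset.sum_boole,
    Nat.card_eq_fintype_card, Fintype.card_subtype, eq_comm]

theorem genFun_sum {n : ℕ} {w : Fin n → α → ℕ} (hw : ∀ i, FiniteFibers (w i)) :
    genFun (fun f : Fin n → α => ∑ i, w i (f i)) = ∏ i, genFun (w i) := by
  induction n with
  | zero => simp [genFun_fintype]
  | succ n ih =>
    have hw_tail (i : Fin n) : FiniteFibers (w i.succ) := hw i.succ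
    rw [Fin.prod_univ_succ, ← ih hw_tail, ← genFun_add (hw 0) (FiniteFibers.sum hw_tail)]
    exact (genFun_congr (Fin.consEquiv fun _ => α) fun x => by
      simp [Fin.consEquiv, Fin.sum_univ_succ]).symm

theorem coeff_genFun_of_injective {w : α → ℕ} (hw : Function.Injective w) (d : ℕ) :
    PowerSeries.coeff d (genFun w) = if ∃ a, w a = d then 1 else 0 := by
  rw [genFun, PowerSeries.coeff_mk]
  split_ifs with h
  · obtain ⟨a, rfl⟩ := h
    simp [hw.eq_iff]
  · have : IsEmpty {a // w a = d} := ⟨fun a => h ⟨a, a.2⟩⟩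
    simp

theorem mul_add_injective {m : ℕ} (hm : 0 < m) (c : ℕ) :
    Function.Injective fun b : ℕ => m * (b + c) :=
  (mul_right_injective₀ hm.ne').comp (add_left_injective c)

theorem one_sub_X_pow_mul_genFun {m : ℕ} (hm : 0 < m) (c : ℕ) :
    (1 - PowerSeries.X ^ m) * genFun (fun b : ℕ => m * (b + c)) = PowerSeries.X ^ (m * c) := by
  ext d
  rw [sub_mul, one_mul, map_sub, PowerSeries.coeff_X_pow_mul', PowerSeries.coeff_X_pow,
    coeff_genFun_of_injective (mul_add_injective hm c),
    coeff_genFun_of_injective (mul_add_injective hm c)]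
  have exists_iff : (∃ b, m * (b + c) = d) ↔ d = m * c ∨ m ≤ d ∧ ∃ b, m * (b + c) = d - m := by
    constructor
    · rintro ⟨_ | b, rfl⟩
      · simp
      · have split : m * (b + 1 + c) = m * (b + c) + m := by ring
        exact .inr ⟨by omega, b, by omega⟩
    · rintro (rfl | ⟨hd, b, hb⟩)
      · exact ⟨0, by simp⟩
      · exact ⟨b + 1, by linarith [Nat.sub_add_cancel hd]⟩
  have exclusive : ¬ (d = m * c ∧ m ≤ d ∧ ∃ b, m * (b + c) = d - m) := by
    rintro ⟨rfl, hd, b, hb⟩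
    nlinarith [Nat.sub_add_cancel hd]
  by_cases h : d = m * c <;> simp_all [ite_and]

end GeneratingFunctions

section Jumps

/-- `d_i ≤ a_i - a_{i-1}` for all `i`, with the convention `a_{-1} = 0`: the sequence `a` is weakly
increasing and jumps by at least `d_i` when it reaches its `i`-th term. -/
def HasJumps {n : ℕ} (d a : Fin n → ℕ) : Prop :=
  ∀ i, (Fin.cons 0 a : Fin (n + 1) → ℕ) i.castSucc + d i ≤ a i

theorem cons_zero_partialSum_succ {n : ℕ} (f : Fin n → ℕ) :
    (Fin.cons 0 fun i => Fin.partialSum f i.succ : Fin (n + 1) → ℕ) = Fin.partialSum f := by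
  rw [← Fin.partialSum_zero f]
  exact Fin.cons_self_tail _

/-- A sequence with jumps at least `d` is determined by the excess `b` of its jumps over `d`. -/
def jumpEquiv {n : ℕ} (d : Fin n → ℕ) : (Fin n → ℕ) ≃ {a // HasJumps d a} where
  toFun b := ⟨fun i => Fin.partialSum (b + d) i.succ, fun i => by
    dsimp only
    rw [cons_zero_partialSum_succ, Fin.partialSum_succ, Pi.add_apply]
    omega⟩
  invFun a i := a.1 i - ((Fin.cons 0 a.1 : Fin (n + 1) → ℕ) i.castSucc + d i)
  left_inv b := by
    ext i
    dsimp only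
    rw [cons_zero_partialSum_succ, Fin.partialSum_succ, Pi.add_apply]
    omega
  right_inv := by
    rintro ⟨a, ha⟩
    ext i
    dsimp only
    change _ = (Fin.cons 0 a : Fin (n + 1) → ℕ) i.succ
    generalize i.succ = j
    induction j using Fin.induction with
    | zero => simp
    | succ i ih =>
      have := ha i
      rw [Fin.partialSum_succ, ih, Pi.add_apply, Fin.cons_succ]
      omega

theorem sum_partialSum_succ {n : ℕ} (f : Fin n → ℕ) :
    ∑ i : Fin n, Fin.partialSum f i.succ = ∑ i : Fin n, (n - i) * f i := by
  induction n with
  | zero => simp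
  | succ n ih =>
    simp only [Fin.partialSum_succ', Finset.sum_add_distrib]
    rw [Fin.sum_univ_succ (Fin.partialSum (Fin.tail f)), ih,
      Fin.sum_univ_succ fun i : Fin (n + 1) => (n + 1 - (i : ℕ)) * f i]
    simp [Fin.tail]

/-- The `q`-Pochhammer symbol `(q; q)_n`. -/
def qPochhammer (n : ℕ) : PowerSeries ℤ :=
  ∏ j ∈ Finset.Icc 1 n, (1 - PowerSeries.X ^ j)

theorem qPochhammer_eq_prod_fin (n : ℕ) :
    qPochhammer n = ∏ i : Fin n, (1 - PowerSeries.X ^ (n - i : ℕ)) := by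
  rw [qPochhammer,
    Fin.prod_univ_eq_prod_range fun i => 1 - (PowerSeries.X : PowerSeries ℤ) ^ (n - i)]
  refine Finset.prod_nbij' (n - ·) (n - ·) ?_ ?_ ?_ ?_ ?_ <;> grind

theorem qPochhammer_mul_genFun_hasJumps {n : ℕ} (d : Fin n → ℕ) :
    qPochhammer n * genFun (fun a : {a // HasJumps d a} => ∑ i, a.1 i) =
      PowerSeries.X ^ ∑ i : Fin n, (n - i) * d i := by
  have pos (i : Fin n) : 0 < n - i.val := Nat.sub_pos_of_lt i.isLt
  calc
    _ = qPochhammer n * genFun (fun b : Fin n → ℕ => ∑ i : Fin n, (n - i) * (b i + d i)) := by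
      exact congrArg _ (genFun_congr (jumpEquiv d) fun b => sum_partialSum_succ (b + d)).symm
    _ = ∏ i : Fin n, (1 - PowerSeries.X ^ (n - i : ℕ)) *
          genFun (fun b : ℕ => (n - i) * (b + d i)) := by
      rw [qPochhammer_eq_prod_fin, Finset.prod_mul_distrib,
        genFun_sum fun i => FiniteFibers.of_injective (mul_add_injective (pos i) (d i))]
    _ = PowerSeries.X ^ ∑ i : Fin n, (n - i) * d i := by
      simp only [one_sub_X_pow_mul_genFun (pos _), Finset.prod_pow_eq_pow_sum]

theorem hasJumps_succ_iff {m : ℕ} {d a : Fin (m + 1) → ℕ} :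
    HasJumps d a ↔ d 0 ≤ a 0 ∧ ∀ i : Fin m, a i.castSucc + d i.succ ≤ a i.succ := by
  simp [HasJumps, Fin.forall_fin_succ]

end Jumps

section ReadingOrder

variable {n k : ℕ}

theorem rNbr_comm {R : Finset ℕ} {a b : ℕ} : RNbr R a b ↔ RNbr R b a := by
  rw [RNbr, RNbr, min_comm, max_comm]

theorem rNbr_iff_count_eq {R : Finset ℕ} {a b : ℕ} :
    RNbr R a b ↔ Nat.count (· ∉ R) a = Nat.count (· ∉ R) b := by
  wlog hab : a ≤ b generalizing a b
  · rw [rNbr_comm, this (le_of_not_ge hab), eq_comm]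
  obtain ⟨c, rfl⟩ := Nat.exists_eq_add_of_le hab
  rw [RNbr, min_eq_left hab, max_eq_right hab, Nat.count_add, left_eq_add,
    Nat.count_iff_forall_not]
  exact ⟨fun h m hm => not_not.2 (h _ (by simp [hm])), fun h t ht => by
    obtain ⟨m, rfl⟩ := Nat.exists_eq_add_of_le (Finset.mem_Ico.1 ht).1
    exact not_not.1 (h m (by simpa using ht))⟩

/-- The position of the index `a` in the reading order of a constant list: blocks of `R`-neighbors
are read from left to right, and the indices of one block from right to left. -/
def tieKey (R : Finset ℕ) (a : ℕ) : ℕ ×ₗ ℕᵒᵈ :=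
  toLex (Nat.count (· ∉ R) a, OrderDual.toDual a)

theorem tieKey_injective (R : Finset ℕ) : Function.Injective (tieKey R) := fun _ _ h =>
  congrArg (fun p : ℕ ×ₗ ℕᵒᵈ => OrderDual.ofDual (ofLex p).2) h

theorem tieKey_lt_iff {R : Finset ℕ} {a b : ℕ} :
    tieKey R a < tieKey R b ↔ (a < b ∧ ¬ RNbr R a b) ∨ (b < a ∧ RNbr R b a) := by
  have mono : Monotone (Nat.count (· ∉ R)) := Nat.count_monotone _
  simp only [tieKey, Prod.Lex.toLex_lt_toLex, OrderDual.toDual_lt_toDual, rNbr_iff_count_eq]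
  rcases lt_trichotomy a b with h | rfl | h
  · have := mono h.le
    omega
  · omega
  · have := mono h.le
    omega

/-- The key by which the reading order of `S` sorts the indices. The `0`-based index `u` stands for
the index `u + 1` of the paper. -/
def readKey (R : Finset ℕ) (S : Fin n → Seq k) (u : Fin n) : Lex (Fin k → ℕ) ×ₗ ℕ ×ₗ ℕᵒᵈ :=
  toLex (toLex (S u), tieKey R (u + 1))

theorem readKey_injective (R : Finset ℕ) (S : Fin n → Seq k) :
    Function.Injective (readKey R S) := fun _ _ h =>
  Fin.ext (Nat.succ_injective (tieKey_injective R (congrArg (fun p => (ofLex p).2) h)))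

theorem lexLt_iff {a b : Seq k} : lexLt a b ↔ toLex a < toLex b :=
  Iff.rfl

theorem readKey_lt_iff {R : Finset ℕ} {S : Fin n → Seq k} {u v : Fin n} :
    readKey R S u < readKey R S v ↔
      lexLt (S u) (S v) ∨ S u = S v ∧ tieKey R (u + 1) < tieKey R (v + 1) := by
  rw [readKey, readKey, Prod.Lex.toLex_lt_toLex, lexLt_iff, toLex_inj]

theorem sget_val_succ (S : Fin n → Seq k) (u : Fin n) : sget S (u + 1) = S u := by
  simp [sget]

theorem pget_val_succ (σ : Equiv.Perm (Fin n)) (i : Fin n) : pget σ (i + 1) = σ i + 1 := by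
  simp [pget]

theorem readBefore_pget_iff {R : Finset ℕ} {S : Fin n → Seq k} {σ : Equiv.Perm (Fin n)}
    {i j : Fin n} (hij : j.val = i + 1) :
    readBefore R S (pget σ j) (pget σ (j + 1)) ↔ readKey R S (σ i) < readKey R S (σ j) := by
  rw [readBefore, pget_val_succ, hij, pget_val_succ, sget_val_succ, sget_val_succ, readKey_lt_iff,
    tieKey_lt_iff]

theorem desCond_iff {R : Finset ℕ} {S : Fin n → Seq k} {σ : Equiv.Perm (Fin n)} {i j : Fin n}
    (hij : j.val = i + 1) : desCond R S σ j ↔ readKey R S (σ j) < readKey R S (σ i) := by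
  rw [desCond, pget_val_succ, hij, pget_val_succ, sget_val_succ, sget_val_succ, readKey_lt_iff]
  simp only [← tieKey_lt_iff]
  split_ifs with h <;> simp [h, lexLe]

theorem val_mem_desPerm_iff {π : Equiv.Perm (Fin n)} {i j : Fin n} (hij : j.val = i + 1) :
    j.val ∈ desPerm π ↔ π j < π i := by
  rw [desPerm, Finset.mem_filter, pget_val_succ, hij, pget_val_succ]
  simp
  omega

/-- The reading permutation `σ_R(S)`. -/
def readingPerm (R : Finset ℕ) (S : Fin n → Seq k) : Equiv.Perm (Fin n) :=
  Tuple.sort (readKey R S)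

theorem readingPerm_eq_iff {R : Finset ℕ} {S : Fin n → Seq k} {σ : Equiv.Perm (Fin n)} :
    readingPerm R S = σ ↔ StrictMono (readKey R S ∘ σ) := by
  have monotone_sorted : Monotone (readKey R S ∘ readingPerm R S) := Tuple.monotone_sort _
  constructor
  · rintro rfl
    exact monotone_sorted.strictMono_of_injective
      ((readKey_injective R S).comp (Equiv.injective _))
  · intro hσ
    have same_values := Tuple.unique_monotone monotone_sorted hσ.monotone
    exact Equiv.ext fun i => readKey_injective R S (congrFun same_values i)

theorem exists_consecutive_of_mem_Icc {d : ℕ} (hd : d ∈ Finset.Icc 1 (n - 1)) :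
    ∃ i j : Fin n, j.val = i + 1 ∧ d = j :=
  ⟨⟨d - 1, by grind⟩, ⟨d, by grind⟩, by grind⟩

theorem isReading_iff {R : Finset ℕ} {S : Fin n → Seq k} {σ : Equiv.Perm (Fin n)} :
    IsReading R S σ ↔ readingPerm R S = σ := by
  rw [readingPerm_eq_iff]
  constructor
  · intro h
    cases n with
    | zero => exact Subsingleton.strictMono _
    | succ m =>
      refine Fin.strictMono_iff_lt_succ.2 fun i => ?_
      have consecutive : i.succ.val = i.castSucc + 1 := rfl
      exact (readBefore_pget_iff consecutive).1 (h i.succ (by simp))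
  · intro h d hd
    obtain ⟨i, j, hij, rfl⟩ := exists_consecutive_of_mem_Icc hd
    exact (readBefore_pget_iff hij).2 (h (Fin.lt_def.2 (by omega)))

theorem readKey_lt_iff_readingPerm_inv_lt {R : Finset ℕ} {S : Fin n → Seq k} {u v : Fin n} :
    readKey R S u < readKey R S v ↔ (readingPerm R S)⁻¹ u < (readingPerm R S)⁻¹ v := by
  rw [← (readingPerm_eq_iff.1 (rfl : readingPerm R S = _)).lt_iff_lt]
  simp

theorem desSet_eq_desPerm (R : Finset ℕ) (S : Fin n → Seq k) (σ : Equiv.Perm (Fin n)) :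
    DesSet R S σ = desPerm ((readingPerm R S)⁻¹ * σ) := by
  ext d
  by_cases hd : d ∈ Finset.Icc 1 (n - 1)
  · obtain ⟨i, j, hij, rfl⟩ := exists_consecutive_of_mem_Icc hd
    rw [val_mem_desPerm_iff hij, DesSet, Finset.mem_filter, desCond_iff hij,
      readKey_lt_iff_readingPerm_inv_lt]
    simp [hd]
  · simp [DesSet, desPerm, hd]

theorem comaj_eq_comajP (R : Finset ℕ) (S : Fin n → Seq k) (σ : Equiv.Perm (Fin n)) :
    Comaj R S σ = comajP ((readingPerm R S)⁻¹ * σ) := by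
  rw [Comaj, comajP, desSet_eq_desPerm]

end ReadingOrder

section PrependedColumn

variable {n k : ℕ}

/-- The indicator of the positions at which `π` descends, the `0`-based index `i` standing for the
position between the `i`-th and the `(i + 1)`-st letter of the paper's one-line notation. -/
def descentIndicator (π : Equiv.Perm (Fin n)) (i : Fin n) : ℕ :=
  if i.val ∈ desPerm π then 1 else 0

theorem sum_mul_descentIndicator (π : Equiv.Perm (Fin n)) :
    ∑ i : Fin n, (n - i) * descentIndicator π i = comajP π := by
  simp only [descentIndicator, mul_ite, mul_one, mul_zero]
  rw [Fin.sum_univ_eq_sum_range fun i => if i ∈ desPerm π then n - i else 0, ← Finset.sum_filter,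
    comajP]
  refine Finset.sum_congr ?_ fun _ _ => rfl
  ext i
  simp only [desPerm, Finset.mem_filter, Finset.mem_range, Finset.mem_Icc]
  omega

/-- The list `S` with the column `a` prepended to its sequences. -/
def prependColumn (a : Fin n → ℕ) (S : Fin n → Seq k) (j : Fin n) : Seq (k + 1) :=
  Fin.cons (a j) (S j)

theorem lexLt_cons_cons {x y : ℕ} {a b : Seq k} :
    lexLt (Fin.cons x a : Seq (k + 1)) (Fin.cons y b) ↔ x < y ∨ x = y ∧ lexLt a b :=
  Fin.pi_lex_lt_cons_cons fun {_} => (· < ·)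

theorem readKey_prependColumn_lt_iff {R : Finset ℕ} {a : Fin n → ℕ} {S : Fin n → Seq k}
    {u v : Fin n} :
    readKey R (prependColumn a S) u < readKey R (prependColumn a S) v ↔
      a u < a v ∨ a u = a v ∧ readKey R S u < readKey R S v := by
  simp only [readKey_lt_iff, prependColumn, lexLt_cons_cons, Fin.cons_inj]
  tauto

theorem readingPerm_prependColumn_eq_iff {R : Finset ℕ} {a : Fin n → ℕ} {S : Fin n → Seq k}
    {σ : Equiv.Perm (Fin n)} :
    readingPerm R (prependColumn a S) = σ ↔
      HasJumps (descentIndicator ((readingPerm R S)⁻¹ * σ)) (a ∘ σ) := by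
  rw [readingPerm_eq_iff]
  cases n with
  | zero => exact iff_of_true (Subsingleton.strictMono _) finZeroElim
  | succ m =>
    have no_jump : descentIndicator ((readingPerm R S)⁻¹ * σ) 0 = 0 := by
      simp [descentIndicator, desPerm]
    rw [Fin.strictMono_iff_lt_succ, hasJumps_succ_iff, no_jump,
      and_iff_right (Nat.zero_le _)]
    refine forall_congr' fun i => ?_
    have ne : ((readingPerm R S)⁻¹ * σ) i.succ ≠ ((readingPerm R S)⁻¹ * σ) i.castSucc :=
      (Equiv.injective _).ne i.castSucc_lt_succ.ne'
    have consecutive : i.succ.val = i.castSucc + 1 := rfl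
    rw [Function.comp_apply, Function.comp_apply, readKey_prependColumn_lt_iff,
      readKey_lt_iff_readingPerm_inv_lt, ← Equiv.Perm.mul_apply, ← Equiv.Perm.mul_apply]
    simp only [Function.comp_apply, descentIndicator, val_mem_desPerm_iff consecutive]
    split_ifs <;> grind

theorem hasJumps_card_inter_Ico {D : Finset ℕ} (hD : 0 ∉ D) :
    HasJumps (fun i : Fin n => if i.val ∈ D then 1 else 0)
      fun i => (D ∩ Finset.Ico 1 (i + 1)).card := by
  cases n with
  | zero => exact finZeroElim
  | succ m =>
    refine hasJumps_succ_iff.2 ⟨by simp [hD], fun i => ?_⟩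
    have subset : D ∩ Finset.Ico 1 (i.castSucc + 1) ⊆ D ∩ Finset.Ico 1 (i.succ + 1) := by grind
    split_ifs with h
    · refine Finset.card_lt_card (subset.ssubset_of_mem_notMem (a := i.succ.val) ?_ ?_) <;> grind
    · exact Finset.card_le_card subset

theorem readingPerm_Zop (R : Finset ℕ) (S : Fin n → Seq k) (σ : Equiv.Perm (Fin n)) :
    readingPerm R (Zop R σ S) = σ := by
  have positive : 0 ∉ desPerm ((readingPerm R S)⁻¹ * σ) := by simp [desPerm]
  have column_comp : (fun v => (DesSet R S σ ∩ Finset.Ico 1 (σ.symm v + 1)).card) ∘ σ =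
      fun i : Fin n => (desPerm ((readingPerm R S)⁻¹ * σ) ∩ Finset.Ico 1 (i + 1)).card := by
    ext i
    simp [desSet_eq_desPerm]
  refine readingPerm_prependColumn_eq_iff.2 ?_
  rw [column_comp]
  exact hasJumps_card_inter_Ico positive

end PrependedColumn

section Recursion

variable {n k : ℕ}

/-- The total weight `|S|` of a list `S`, the sum of all entries. -/
def totalWeight (S : Fin n → Seq k) : ℕ :=
  ∑ j, ∑ i, S j i

theorem finiteFibers_totalWeight : FiniteFibers (totalWeight : (Fin n → Seq k) → ℕ) :=
  FiniteFibers.sum fun _ => FiniteFibers.sum fun _ => FiniteFibers.of_injective fun _ _ h => h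

theorem totalWeight_prependColumn (a : Fin n → ℕ) (S : Fin n → Seq k) :
    totalWeight (prependColumn a S) = totalWeight S + ∑ i, a i := by
  simp [totalWeight, prependColumn, Fin.sum_univ_succ, Finset.sum_add_distrib, add_comm]

theorem prependColumn_tail (S : Fin n → Seq (k + 1)) :
    prependColumn (fun j => S j 0) (fun j => Fin.tail (S j)) = S :=
  funext fun j => Fin.cons_self_tail (S j)

/-- The generating function `∑_S q^{|S|}` over the lists `S` in `(ℕ^k)^n` with reading
permutation `σ`. -/
def readingSeries (R : Finset ℕ) (k : ℕ) (σ : Equiv.Perm (Fin n)) : PowerSeries ℤ :=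
  genFun fun S : {S : Fin n → Seq k // readingPerm R S = σ} => totalWeight S.1

theorem finiteFibers_totalWeight_readingPerm (R : Finset ℕ) (σ : Equiv.Perm (Fin n)) :
    FiniteFibers fun S : {S : Fin n → Seq k // readingPerm R S = σ} => totalWeight S.1 :=
  finiteFibers_totalWeight.comp_injective Subtype.val_injective

/-- The columns that can be prepended to a list with reading permutation `τ` to get one with reading
permutation `σ`. -/
abbrev StepColumn (τ σ : Equiv.Perm (Fin n)) :=
  {a : Fin n → ℕ // HasJumps (descentIndicator (τ⁻¹ * σ)) (a ∘ σ)}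

/-- A list with reading permutation `σ`, split into its first column and the remaining list. -/
def splitColumnEquiv (R : Finset ℕ) (k : ℕ) (σ : Equiv.Perm (Fin n)) :
    {S : Fin n → Seq (k + 1) // readingPerm R S = σ} ≃
      Σ τ, {S : Fin n → Seq k // readingPerm R S = τ} × StepColumn τ σ where
  toFun S := ⟨_, ⟨fun j => Fin.tail (S.1 j), rfl⟩, fun j => S.1 j 0,
    readingPerm_prependColumn_eq_iff.1 (by
      rw [prependColumn_tail]
      exact S.2)⟩
  invFun x := ⟨prependColumn x.2.2.1 x.2.1.1,
    readingPerm_prependColumn_eq_iff.2 (by rw [x.2.1.2]; exact x.2.2.2)⟩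
  left_inv S := Subtype.ext (prependColumn_tail S.1)
  right_inv := by
    rintro ⟨_, ⟨S, rfl⟩, a⟩
    rfl

theorem finiteFibers_stepColumn (τ σ : Equiv.Perm (Fin n)) :
    FiniteFibers fun a : StepColumn τ σ => ∑ i, a.1 i :=
  (FiniteFibers.sum fun _ => FiniteFibers.of_injective fun _ _ h => h).comp_injective
    Subtype.val_injective

theorem qPochhammer_mul_genFun_stepColumn (τ σ : Equiv.Perm (Fin n)) :
    qPochhammer n * genFun (fun a : StepColumn τ σ => ∑ i, a.1 i) =
      PowerSeries.X ^ comajP (τ⁻¹ * σ) := by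
  let e : StepColumn τ σ ≃ {a // HasJumps (descentIndicator (τ⁻¹ * σ)) a} :=
    (σ.symm.arrowCongr (Equiv.refl ℕ)).subtypeEquiv fun _ => Iff.rfl
  rw [← sum_mul_descentIndicator, ← qPochhammer_mul_genFun_hasJumps]
  exact congrArg _ (genFun_congr e fun a => Equiv.sum_comp σ a.1)

theorem qPochhammer_mul_readingSeries_succ (R : Finset ℕ) (k : ℕ) (σ : Equiv.Perm (Fin n)) :
    qPochhammer n * readingSeries R (k + 1) σ =
      ∑ τ, readingSeries R k τ * PowerSeries.X ^ comajP (τ⁻¹ * σ) := by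
  have finiteFibers (τ : Equiv.Perm (Fin n)) :=
    (finiteFibers_totalWeight_readingPerm (k := k) R τ).add (finiteFibers_stepColumn τ σ)
  have split : readingSeries R (k + 1) σ =
      ∑ τ, readingSeries R k τ * genFun (fun a : StepColumn τ σ => ∑ i, a.1 i) := by
    simp only [readingSeries, ← genFun_add (finiteFibers_totalWeight_readingPerm R _)
      (finiteFibers_stepColumn _ σ)]
    rw [← genFun_sigma finiteFibers]
    exact (genFun_congr (splitColumnEquiv R k σ).symm fun x =>
      totalWeight_prependColumn x.2.2.1 x.2.1.1).symm
  rw [split, Finset.mul_sum]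
  refine Finset.sum_congr rfl fun τ _ => ?_
  rw [mul_left_comm, qPochhammer_mul_genFun_stepColumn]

theorem readingSeries_zero (R : Finset ℕ) (S : Fin n → Seq 0) (σ : Equiv.Perm (Fin n)) :
    readingSeries R 0 σ = if readingPerm R S = σ then 1 else 0 := by
  have univ_eq : (Finset.univ : Finset (Fin n → Seq 0)) = {S} :=
    Finset.eq_singleton_iff_unique_mem.2 ⟨Finset.mem_univ S, fun T _ => Subsingleton.elim T S⟩
  rw [readingSeries, genFun_fintype]
  simp only [totalWeight, Finset.univ_eq_empty, Finset.sum_empty, Finset.sum_const_zero, pow_zero,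
    Finset.sum_const, Finset.card_univ, Fintype.card_subtype, univ_eq, Finset.filter_singleton]
  split_ifs <;> simp

theorem extFun_snoc (v : Fin k → Equiv.Perm (Fin n)) (τ : Equiv.Perm (Fin n)) :
    extFun (Fin.snoc v τ) = Function.update (extFun v) k τ := by
  funext j
  rcases lt_trichotomy j k with h | rfl | h
  · simp [extFun, Fin.snoc, h, h.ne, Nat.lt_succ_of_lt h]
  · simp [extFun, Fin.snoc]
  · simp [extFun, h.ne', not_lt_of_gt h, Nat.not_le_of_gt h]

theorem Zvec_congr {R : Finset ℕ} {s t : ℕ → Equiv.Perm (Fin n)} (h : ∀ i < k, s i = t i) :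
    Zvec R s k = Zvec R t k := by
  induction k with
  | zero => rfl
  | succ k ih => rw [Zvec, Zvec, ih fun i hi => h i (by omega), h k (by omega)]

theorem readingPerm_Zvec_succ (R : Finset ℕ) (s : ℕ → Equiv.Perm (Fin n)) :
    readingPerm R (Zvec R s (k + 1)) = s k :=
  readingPerm_Zop _ _ _

/-- `comaj^1_R + ⋯ + comaj^{k + 1}_R` of the sequence of permutations `v^1, …, v^k, σ`. -/
def totalComaj (R : Finset ℕ) (v : Fin k → Equiv.Perm (Fin n)) (σ : Equiv.Perm (Fin n)) : ℕ :=
  ∑ i ∈ Finset.range k, Comaj R (Zvec R (extFun v) i) (extFun v i) +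
    Comaj R (Zvec R (extFun v) k) σ

theorem totalComaj_snoc (R : Finset ℕ) (v : Fin k → Equiv.Perm (Fin n))
    (τ σ : Equiv.Perm (Fin n)) :
    totalComaj R (Fin.snoc v τ : Fin (k + 1) → Equiv.Perm (Fin n)) σ =
      totalComaj R v τ + comajP (τ⁻¹ * σ) := by
  have agree (i : ℕ) (hi : i < k) : extFun (Fin.snoc v τ : Fin (k + 1) → _) i = extFun v i := by
    rw [extFun_snoc, Function.update_of_ne hi.ne]
  have last : extFun (Fin.snoc v τ : Fin (k + 1) → _) k = τ := by
    rw [extFun_snoc, Function.update_self]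
  have Zvec_agree (i : ℕ) (hi : i ≤ k) :
      Zvec R (extFun (Fin.snoc v τ : Fin (k + 1) → _)) i = Zvec R (extFun v) i :=
    Zvec_congr fun j hj => agree j (hj.trans_le hi)
  rw [totalComaj, totalComaj, comaj_eq_comajP, readingPerm_Zvec_succ, Finset.sum_range_succ, last,
    Zvec_agree k le_rfl]
  congr 2
  refine Finset.sum_congr rfl fun i hi => ?_
  rw [agree i (Finset.mem_range.1 hi), Zvec_agree i (Finset.mem_range.1 hi).le]

theorem qPochhammer_pow_mul_readingSeries (R : Finset ℕ) (k : ℕ) (σ : Equiv.Perm (Fin n)) :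
    qPochhammer n ^ (k + 1) * readingSeries R (k + 1) σ =
      ∑ v : Fin k → Equiv.Perm (Fin n), PowerSeries.X ^ totalComaj R v σ := by
  induction k generalizing σ with
  | zero =>
    rw [zero_add, pow_one, qPochhammer_mul_readingSeries_succ]
    simp [readingSeries_zero R fun _ : Fin n => (0 : Seq 0), totalComaj, comaj_eq_comajP, Zvec]
  | succ k ih =>
    rw [pow_succ, mul_assoc, qPochhammer_mul_readingSeries_succ, Finset.mul_sum]
    simp only [← mul_assoc, ih]
    rw [← (Fin.snocEquiv fun _ : Fin (k + 1) => Equiv.Perm (Fin n)).sum_comp, Fintype.sum_prod_type]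
    refine Finset.sum_congr rfl fun τ _ => ?_
    rw [Finset.sum_mul]
    refine Finset.sum_congr rfl fun v _ => ?_
    rw [← pow_add, ← totalComaj_snoc]
    rfl

end Recursion

theorem finite_SYT (μ : YoungDiagram) : Finite (SYT μ) := by
  have pos_injective : Function.Injective
      fun (T : SYT μ) (i : Finset.Icc 1 μ.card) => (⟨T.pos i, T.mem i i.2⟩ : μ.cells) := by
    rintro ⟨pos, _, _, _, _, _, junk⟩ ⟨pos', _, _, _, _, _, junk'⟩ h
    have : pos = pos' := by
      funext i
      by_cases hi : i ∈ Finset.Icc 1 μ.card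
      · exact congrArg Subtype.val (congrFun h ⟨i, hi⟩)
      · rw [junk i hi, junk' i hi]
    subst this
    rfl
  exact Finite.of_injective _ pos_injective

theorem sum_comajI_eq_totalComaj {n k : ℕ} (R : Finset ℕ) (v : Fin k → Equiv.Perm (Fin n)) :
    ∑ i ∈ Finset.Icc 1 (k + 1), comajI R (k + 1) v i = totalComaj R v 1 := by
  have last : extFun v k = 1 := by simp [extFun]
  rw [totalComaj, ← last,
    ← Finset.sum_range_succ fun i => Comaj R (Zvec R (extFun v) i) (extFun v i),
    ← Finset.Ico_add_one_right_eq_Icc, Finset.sum_Ico_eq_sum_range]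
  exact Finset.sum_congr rfl fun i _ =>
    congrArg (fun i => Comaj R (Zvec R (extFun v) i) (extFun v i)) (Nat.add_sub_cancel_left 1 i)

theorem mk_card_isReading_one_eq_sum_readingSeries {ι : Type*} [Fintype ι] (n k : ℕ)
    (R : ι → Finset ℕ) :
    PowerSeries.mk (fun d =>
        (Nat.card {TS : ι × (Fin n → Seq k) //
          IsReading (R TS.1) TS.2 1 ∧ (∑ j : Fin n, ∑ i : Fin k, TS.2 j i) = d} : ℤ)) =
      ∑ t, readingSeries (R t) k (1 : Equiv.Perm (Fin n)) := by
  simp only [readingSeries, isReading_iff]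
  rw [← genFun_sigma fun t => finiteFibers_totalWeight_readingPerm (R t) 1]
  ext d
  simp only [genFun, PowerSeries.coeff_mk]
  exact congrArg _ (Nat.card_congr
    { toFun := fun x => ⟨⟨x.1.1, x.1.2, x.2.1⟩, x.2.2⟩
      invFun := fun x => ⟨(x.1.1, x.1.2.1), x.1.2.2, x.2⟩ })

theorem kronecker_harmonics_general {ι : Type*} [Finite ι] (n k : ℕ) (hk : 1 ≤ k)
    (R : ι → Finset ℕ) :
    (∏ j ∈ Finset.Icc 1 n, (1 - (PowerSeries.X : PowerSeries ℤ) ^ j)) ^ k *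
      PowerSeries.mk (fun d =>
        (Nat.card {TS : ι × (Fin n → Seq k) //
          IsReading (R TS.1) TS.2 1 ∧ (∑ j : Fin n, ∑ i : Fin k, TS.2 j i) = d} : ℤ)) =
    PowerSeries.mk (fun d =>
      (Nat.card {Tv : ι × (Fin (k-1) → Equiv.Perm (Fin n)) //
        (∑ i ∈ Finset.Icc 1 k, comajI (R Tv.1) k Tv.2 i) = d} : ℤ)) := by
  have := Fintype.ofFinite ι
  obtain ⟨k, rfl⟩ := Nat.exists_eq_add_of_le' hk
  rw [mk_card_isReading_one_eq_sum_readingSeries, ← qPochhammer, Finset.mul_sum]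
  simp only [qPochhammer_pow_mul_readingSeries]
  refine (Fintype.sum_prod_type' _).symm.trans ?_
  simp only [← sum_comajI_eq_totalComaj]
  exact (genFun_fintype _).symm

/-- **Theorem (graded multiplicities in Kronecker powers of the harmonics).**
For `λ ⊢ n` and `k ≥ 1`, in `ℤ[[q]]`:
`((q;q)_n)^k ⬝ ∑_{T ∈ SYT(λ)} ∑_{S, σ_{des T}(S) = ε} q^{|S|}
  = ∑_{T ∈ SYT(λ)} ∑_{σ⃗ ∈ S_n^{k−1}} q^{comaj_T(σ⃗, ε)}`. -/
theorem kronecker_harmonics (n k : ℕ) (hn : 1 ≤ n) (hk : 1 ≤ k)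
    (μ : YoungDiagram) (hμ : μ.card = n) :
    (∏ j ∈ Finset.Icc 1 n, (1 - (PowerSeries.X : PowerSeries ℤ) ^ j)) ^ k *
      PowerSeries.mk (fun d =>
        (Nat.card {TS : SYT μ × (Fin n → Seq k) //
          IsReading (desSYT TS.1) TS.2 1 ∧ (∑ j : Fin n, ∑ i : Fin k, TS.2 j i) = d} : ℤ)) =
    PowerSeries.mk (fun d =>
      (Nat.card {Tv : SYT μ × (Fin (k-1) → Equiv.Perm (Fin n)) //
        (∑ i ∈ Finset.Icc 1 k, comajI (desSYT Tv.1) k Tv.2 i) = d} : ℤ)) := by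
  have := finite_SYT μ
  exact kronecker_harmonics_general n k hk desSYT

end

end RomeroComaj
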